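/- arXiv:1206.0058 — 2 statements merged into one kernel-verified Lean document; each statement's English description precedes it below -/
import Mathlib

section
/- Let 𝒯 be a pretriangulated category admitting countable coproducts, and let S be a nonempty strictly full subcategory of 𝒯 that is closed under isomorphisms, closed under cones, and closed under countable coproducts. Then S is closed under retracts: if X is a retract of some object Y of S (i.e., there are morphisms i : X → Y and r : Y → X with r ∘ i = id_X), then X lies in S. -/
/-!
Eilenberg swindle. Write `A = ∐ Y` for the countable coproduct of copies of `Y`, and let
`e = r ≫ i` be the idempotent of `Y` with image `X`. Morally `A` is a countable sum of copies of
`X` and of a complement of `X`, and moving the `X`-summands one step to the right gives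
`A ≅ A ⊞ X`. Phrased with `e` and `1 - e`, this isomorphism requires no complement of `X`.
The split triangle `A ⟶ A ⊞ X ⟶ X ⟶ A⟦1⟧` then presents `X` as the cone of a morphism between
objects isomorphic to `A`, which belongs to `S`.
-/

open CategoryTheory Limits Pretriangulated ZeroObject

/-- The swindle: a retract `X` of `Y` is absorbed by the countable coproduct of copies
of `Y`. -/
theorem swindle {C : Type*} [Category C] [Preadditive C] [HasBinaryBiproducts C]
    {X Y : C} [HasCoproduct (fun _ : ℕ => Y)]
    (i : X ⟶ Y) (r : Y ⟶ X) (hir : i ≫ r = 𝟙 X) :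
    Nonempty ((∐ fun _ : ℕ => Y) ≅ (∐ fun _ : ℕ => Y) ⊞ X) := by
  let ι (n : ℕ) : Y ⟶ ∐ fun _ : ℕ => Y := Sigma.ι (fun _ : ℕ => Y) n
  -- `f` shifts the `X`-parts to the right and fixes the complementary parts; `g` shifts them
  -- back to the left, killing the `X`-part in degree `0`, which is recorded by `p` and `s`.
  let f : (∐ fun _ : ℕ => Y) ⟶ ∐ fun _ : ℕ => Y :=
    Sigma.desc fun n => ι n - r ≫ i ≫ ι n + r ≫ i ≫ ι (n + 1)
  let g : (∐ fun _ : ℕ => Y) ⟶ ∐ fun _ : ℕ => Y :=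
    Sigma.desc fun n => Nat.casesOn n (ι 0 - r ≫ i ≫ ι 0)
      fun m => ι (m + 1) - r ≫ i ≫ ι (m + 1) + r ≫ i ≫ ι m
  let p : (∐ fun _ : ℕ => Y) ⟶ X := Sigma.desc fun n => Nat.casesOn n r fun _ => 0
  let s : X ⟶ ∐ fun _ : ℕ => Y := i ≫ ι 0
  have hf (n : ℕ) : ι n ≫ f = ι n - r ≫ i ≫ ι n + r ≫ i ≫ ι (n + 1) := by simp [ι, f]
  have hg₀ : ι 0 ≫ g = ι 0 - r ≫ i ≫ ι 0 := by simp [ι, g]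
  have hg (n : ℕ) : ι (n + 1) ≫ g = ι (n + 1) - r ≫ i ≫ ι (n + 1) + r ≫ i ≫ ι n := by
    simp [ι, g]
  have hp₀ : ι 0 ≫ p = r := by simp [ι, p]
  have hp (n : ℕ) : ι (n + 1) ≫ p = 0 := by simp [ι, p]
  have hir' {Z : C} (h : X ⟶ Z) : i ≫ r ≫ h = h := by
    rw [← Category.assoc, hir, Category.id_comp]
  have hfg : f ≫ g = 𝟙 _ := by
    refine Sigma.hom_ext _ _ fun n => ?_
    change ι n ≫ f ≫ g = ι n ≫ 𝟙 _
    rw [← Category.assoc, hf]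
    cases n <;> simp [hg₀, hg, hir', Preadditive.add_comp, Preadditive.sub_comp]
  have hfp : f ≫ p = 0 := by
    refine Sigma.hom_ext _ _ fun n => ?_
    change ι n ≫ f ≫ p = ι n ≫ 0
    rw [← Category.assoc, hf]
    cases n <;> simp [hp₀, hp, hir, Preadditive.add_comp, Preadditive.sub_comp]
  have hsg : s ≫ g = 0 := by simp [s, hg₀, hir']
  have hsp : s ≫ p = 𝟙 X := by simp [s, hp₀, hir]
  have htot : g ≫ f + p ≫ s = 𝟙 _ := by
    refine Sigma.hom_ext _ _ fun n => ?_
    change ι n ≫ (g ≫ f + p ≫ s) = ι n ≫ 𝟙 _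
    rw [Preadditive.comp_add, ← Category.assoc, ← Category.assoc]
    cases n <;> simp [hg₀, hg, hp₀, hp, hf, s, hir', Preadditive.add_comp, Preadditive.sub_comp]
  refine ⟨⟨biprod.lift g p, biprod.desc f s, by simpa using htot, ?_⟩⟩
  ext <;> simp [hfg, hfp, hsg, hsp]

/-- In a pretriangulated category with countable coproducts, a nonempty strictly
full subcategory closed under isomorphisms, cones and countable coproducts is closed under
retracts. -/
theorem stmt1 {𝒯 : Type*} [Category 𝒯] [HasZeroObject 𝒯] [Preadditive 𝒯]
    [HasShift 𝒯 ℤ] [∀ n : ℤ, (shiftFunctor 𝒯 n).Additive] [Pretriangulated 𝒯]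
    [HasCoproducts.{0} 𝒯]
    (S : Set 𝒯)
    (hne : S.Nonempty)
    (hiso : ∀ ⦃X Y : 𝒯⦄, (X ≅ Y) → X ∈ S → Y ∈ S)
    (hcone : ∀ T : Triangle 𝒯, (T ∈ distTriang 𝒯) → T.obj₁ ∈ S → T.obj₂ ∈ S → T.obj₃ ∈ S)
    (hcoprod : ∀ f : ℕ → 𝒯, (∀ n, f n ∈ S) → (∐ f) ∈ S)
    (X Y : 𝒯) (hY : Y ∈ S) (i : X ⟶ Y) (r : Y ⟶ X) (hir : i ≫ r = 𝟙 X) :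
    X ∈ S := by
  obtain ⟨e⟩ := swindle i r hir
  have hA : (∐ fun _ : ℕ => Y) ∈ S := hcoprod _ fun _ => hY
  exact hcone _ (binaryBiproductTriangle_distinguished (∐ fun _ : ℕ => Y) X) hA (hiso e hA)
end

section
/- Let 𝒯 be a pretriangulated category with all set-indexed coproducts, and let T be a set of objects of 𝒯 each of which is compact, meaning that for every Y ∈ T and every family (X_i) of objects the canonical map ⊕_i Hom(Y, X_i) → Hom(Y, ⊕_i X_i) is a bijection. Let τ be the smallest localizing subcategory of 𝒯 containing T. Then the right orthogonal τ⊥ is closed under set-indexed coproducts: if X_i ∈ τ⊥ for all i, then ⊕_i X_i ∈ τ⊥. -/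
/-!
A localizing subcategory, as defined here, is closed under `⟦1⟧` (the cone of `X ⟶ 0`) but need not
be closed under `⟦-1⟧`, so only non-positive shifts of the target may be used. Put `W = ∐ X` and
consider the class of all `Y` with `Hom(Y, W⟦-n⟧) = 0` for every natural number `n`. It is
localizing, by the long exact sequence of `Hom(-, W⟦-n⟧)` and the identity
`Hom(A⟦1⟧, W⟦-n⟧) = Hom(A, W⟦-(n+1)⟧)`. It contains `T`: for `Y ∈ T`, compactness and the fact that
shifts commute with coproducts give `Hom(Y, W⟦-n⟧) = ⨁ i, Hom(Y, X i⟦-n⟧)`, and each summand is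
`Hom(Y⟦n⟧, X i) = 0` because `Y⟦n⟧ ∈ τ`. Hence the class contains `τ`, and `n = 0` is the claim.
-/

open CategoryTheory Limits Pretriangulated ZeroObject
open scoped DirectSum

universe w v u

variable {𝒯 : Type u} [Category.{v} 𝒯] [HasZeroObject 𝒯] [Preadditive 𝒯]
  [HasShift 𝒯 ℤ] [∀ n : ℤ, (shiftFunctor 𝒯 n).Additive] [Pretriangulated 𝒯]
  [HasCoproducts.{w} 𝒯]

/-- A localizing subcategory: a nonempty class of objects, closed under isomorphisms,
cones, extensions, and all set-indexed coproducts. -/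
def IsLocalizing (S : Set 𝒯) : Prop :=
  S.Nonempty ∧
  (∀ ⦃X Y : 𝒯⦄, (X ≅ Y) → X ∈ S → Y ∈ S) ∧
  (∀ T : Triangle 𝒯, (T ∈ distTriang 𝒯) → T.obj₁ ∈ S → T.obj₂ ∈ S → T.obj₃ ∈ S) ∧
  (∀ T : Triangle 𝒯, (T ∈ distTriang 𝒯) → T.obj₁ ∈ S → T.obj₃ ∈ S → T.obj₂ ∈ S) ∧
  (∀ {ι : Type w} (f : ι → 𝒯), (∀ i, f i ∈ S) → (∐ f) ∈ S)

/-- The smallest localizing subcategory containing a set of objects `T`. -/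
def smallestLocalizing (T : Set 𝒯) : Set 𝒯 :=
  {X | ∀ S : Set 𝒯, IsLocalizing.{w} S → T ⊆ S → X ∈ S}

/-- The right orthogonal of a class of objects. -/
def rightOrthogonal (S : Set 𝒯) : Set 𝒯 :=
  {X | ∀ Y ∈ S, ∀ f : Y ⟶ X, f = 0}

/-- Half of the identity `Hom(A⟦1⟧, W⟦b + 1⟧) = Hom(A, W⟦b⟧)`, obtained by applying `⟦-1⟧`. -/
theorem eq_zero_of_shift_source {A W : 𝒯} {a b : ℤ} (hab : a = b + 1)
    (h : ∀ g : A ⟶ W⟦b⟧, g = 0) (f : A⟦(1 : ℤ)⟧ ⟶ W⟦a⟧) : f = 0 := by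
  have h₁ := h ((shiftShiftNeg A (1 : ℤ)).inv ≫ f⟦(-1 : ℤ)⟧' ≫
    ((shiftFunctorAdd' 𝒯 a (-1) b (by omega)).app W).inv)
  rw [Preadditive.IsIso.comp_left_eq_zero, Preadditive.IsIso.comp_right_eq_zero] at h₁
  exact (Functor.map_eq_zero_iff _).1 h₁

/-- The converse half, obtained by applying `⟦1⟧`. -/
theorem eq_zero_of_shift_map {A W : 𝒯} {a b : ℤ} (hab : a = b + 1)
    (h : ∀ g : A⟦(1 : ℤ)⟧ ⟶ W⟦a⟧, g = 0) (f : A ⟶ W⟦b⟧) : f = 0 := by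
  have h₁ := h (f⟦(1 : ℤ)⟧' ≫ ((shiftFunctorAdd' 𝒯 b 1 a hab.symm).app W).inv)
  rw [Preadditive.IsIso.comp_right_eq_zero] at h₁
  exact (Functor.map_eq_zero_iff _).1 h₁

theorem IsLocalizing.zero_mem {S : Set 𝒯} (hS : IsLocalizing.{w} S) : (0 : 𝒯) ∈ S := by
  obtain ⟨X, hX⟩ := hS.1
  exact hS.2.2.1 _ (contractible_distinguished X) hX hX

theorem IsLocalizing.shift_mem {S : Set 𝒯} (hS : IsLocalizing.{w} S) {A : 𝒯} (hA : A ∈ S) :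
    A⟦(1 : ℤ)⟧ ∈ S :=
  hS.2.2.1 _ (contractible_distinguished₂ A) hA hS.zero_mem

theorem smallestLocalizing_shift_mem {T : Set 𝒯} {A : 𝒯}
    (hA : A ∈ smallestLocalizing.{w} T) : A⟦(1 : ℤ)⟧ ∈ smallestLocalizing.{w} T :=
  fun S hS hT => hS.shift_mem (hA S hS hT)

/-- The right orthogonal of `smallestLocalizing T` is closed under non-positive shifts. -/
theorem shift_neg_mem_rightOrthogonal {T : Set 𝒯} {W : 𝒯}
    (hW : W ∈ rightOrthogonal (smallestLocalizing.{w} T)) (n : ℕ) :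
    W⟦(-n : ℤ)⟧ ∈ rightOrthogonal (smallestLocalizing.{w} T) := by
  induction n with
  | zero =>
    intro Y hY f
    have e : W⟦(-(0 : ℕ) : ℤ)⟧ ≅ W := (shiftFunctorZero' 𝒯 _ (by simp)).app W
    have h₁ := hW Y hY (f ≫ e.hom)
    rwa [Preadditive.IsIso.comp_right_eq_zero] at h₁
  | succ n ih =>
    intro Y hY f
    exact eq_zero_of_shift_map (a := -n) (by push_cast; ring)
      (ih _ (smallestLocalizing_shift_mem hY)) f

/-- The class of objects without nonzero maps to any `W⟦-n⟧`, `n : ℕ`, is localizing. -/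
theorem isLocalizing_leftOrthogonal_shifts (W : 𝒯) :
    IsLocalizing.{w} {Y : 𝒯 | ∀ (n : ℕ) (f : Y ⟶ W⟦(-n : ℤ)⟧), f = 0} := by
  refine ⟨⟨0, fun n f => (isZero_zero 𝒯).eq_of_src _ _⟩, ?_, ?_, ?_, ?_⟩
  · intro A B e hA n f
    have h₁ := hA n (e.hom ≫ f)
    rwa [Preadditive.IsIso.comp_left_eq_zero] at h₁
  · intro D hD h₁ h₂ n f
    obtain ⟨g, rfl⟩ := D.yoneda_exact₃ hD f (h₂ n _)
    rw [eq_zero_of_shift_source (b := -(n + 1 : ℕ)) (by push_cast; ring) (h₁ (n + 1)) g,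
      comp_zero]
  · intro D hD h₁ h₃ n f
    obtain ⟨g, rfl⟩ := D.yoneda_exact₂ hD f (h₁ n _)
    rw [h₃ n g, comp_zero]
  · intro κ F hF n f
    exact Sigma.hom_ext _ _ fun i => (hF i n _).trans comp_zero.symm

/-- If `τ` is the localizing subcategory generated by a set of compact objects,
then `τ⊥` is closed under set-indexed coproducts. -/
theorem stmt3 (T : Set 𝒯)
    (hcompact : ∀ Y ∈ T, ∀ {ι : Type w} [DecidableEq ι] (X : ι → 𝒯),
      Function.Bijective
        (⇑(DirectSum.toAddMonoid (β := fun i => Y ⟶ X i)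
          (fun i => Preadditive.rightComp Y (Sigma.ι X i)) : (⨁ i, (Y ⟶ X i)) →+ (Y ⟶ ∐ X))))
    {ι : Type w} (X : ι → 𝒯)
    (hX : ∀ i, X i ∈ rightOrthogonal (smallestLocalizing.{w} T)) :
    (∐ X) ∈ rightOrthogonal (smallestLocalizing.{w} T) := by
  classical
  intro Y hY f
  have key : Y ∈ {Y : 𝒯 | ∀ (n : ℕ) (f : Y ⟶ (∐ X)⟦(-n : ℤ)⟧), f = 0} := by
    refine hY _ (isLocalizing_leftOrthogonal_shifts (∐ X)) fun Z hZ n g => ?_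
    have hZ' : Z ∈ smallestLocalizing.{w} T := fun S _ hT => hT hZ
    let e := PreservesCoproduct.iso (shiftFunctor 𝒯 (-n : ℤ)) X
    obtain ⟨x, hx⟩ := (hcompact Z hZ fun i => (X i)⟦(-n : ℤ)⟧).2 (g ≫ e.hom)
    have hx₀ : x = 0 := DFinsupp.ext fun i => shift_neg_mem_rightOrthogonal (hX i) n Z hZ' _
    rw [hx₀, map_zero] at hx
    have h₁ := hx.symm
    rwa [Preadditive.IsIso.comp_right_eq_zero] at h₁
  have e : (∐ X)⟦(-(0 : ℕ) : ℤ)⟧ ≅ ∐ X := (shiftFunctorZero' 𝒯 _ (by simp)).app _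
  have h₁ := key 0 (f ≫ e.inv)
  rwa [Preadditive.IsIso.comp_right_eq_zero] at h₁
end
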